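/- arXiv:1110.0868 — 2 statements merged into one kernel-verified Lean document; each statement's English description precedes it below -/
import Mathlib

section
/- Fix integers j and k with k ≥ 1, and let S ⊆ ℤ be a set all of whose elements are congruent to j+k+1 modulo 2. If no matrix in ASM(k) avoids (S,j), then F_{j,k}|_S = 0. -/
/-!
The polynomial `F_{j,k}|_S` is killed by a sign-reversing involution on order ideals.

An order ideal `I` of `P_k` is encoded, on the part lying in `Q_k`, by a height function: for each
column `(r,s)` with `r + s ≡ k (mod 2)` and `|r| + |s| ≤ k`, the height `h(r,s)` is the largest `t`
with `(r,s,t) ∈ I`, or `2|s| - k - 2` (one step below the column) if there is none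
(`exists_isHeight`). Diagonally adjacent columns have heights differing by exactly `2`
(`IsHeight.sub_two_le` together with a congruence modulo `4`). In the coordinates `r = i + l - k`,
`s = l - i` the function `(2(i+l) - h - k - 2)/4` is therefore the corner-sum function of an
alternating sign matrix `A` (`isASM_of_corner`).

If `A_{il} = 1`, the four columns surrounding `(r,s) = (i+l-k-1, l-i)` have heights `m, m` in the
`s`-direction and `m-2, m-2` in the `r`-direction. Hence `x = (r,s,m+1) ∈ Q_{k+1}` has all its lower
covers in `I` and none of its upper covers in `I`, so it can be added to or removed from `I` freely
(`exists_isFree`). Its variable has index `3r + s + j = j + 2i + 4l - 3k - 3`. As `A` does not avoid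
`(S,j)`, some such `x` has its variable specialised to `-1`, and toggling it changes the sign of the
term of `I`. The choice of `x` depends only on `I ∩ Q_k`, which the toggle does not change, so
toggling is an involution and the sum vanishes.
-/

open MvPolynomial
open scoped Classical

noncomputable section

/-- The set `Q_k`: triples `(r,s,t)` with `|r|+|s| ≤ k-2`, `r+s ≡ k (mod 2)`,
`t ≡ 2|s|-k+2 (mod 4)` and `2|s|-k+2 ≤ t ≤ k-2-2|r|`. -/
def pentagramQ (k : ℤ) : Set (ℤ × ℤ × ℤ) :=
  {p | |p.1| + |p.2.1| ≤ k - 2 ∧ (2 : ℤ) ∣ (p.1 + p.2.1 - k) ∧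
    (4 : ℤ) ∣ (p.2.2 - (2 * |p.2.1| - k + 2)) ∧
    2 * |p.2.1| - k + 2 ≤ p.2.2 ∧ p.2.2 ≤ k - 2 - 2 * |p.1|}

/-- The set `P_k = Q_k ∪ Q_{k+1}`. -/
def pentagramP (k : ℤ) : Set (ℤ × ℤ × ℤ) := pentagramQ k ∪ pentagramQ (k + 1)

/-- The covering relation: `(r',s',t')` covers `(r,s,t)` iff `t' = t + 1` and
`|r'-r| + |s'-s| = 1`. -/
def pentagramCovers (x y : ℤ × ℤ × ℤ) : Prop :=
  y.2.2 = x.2.2 + 1 ∧ |y.1 - x.1| + |y.2.1 - x.2.1| = 1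

/-- The partial order on `P_k`: the reflexive-transitive closure of the covering
relation within `P_k`. -/
def pentagramLe (k : ℤ) : (ℤ × ℤ × ℤ) → (ℤ × ℤ × ℤ) → Prop :=
  Relation.ReflTransGen
    (fun x y => x ∈ pentagramP k ∧ y ∈ pentagramP k ∧ pentagramCovers x y)

/-- An order ideal of `P_k`: a downward-closed subset of `P_k`. -/
def IsPentagramOrderIdeal (k : ℤ) (I : Set (ℤ × ℤ × ℤ)) : Prop :=
  I ⊆ pentagramP k ∧ ∀ x y, y ∈ I → pentagramLe k x y → x ∈ I

/-- `P_k` realized as a `Finset` (it is contained in the displayed finite box). -/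
def pentagramPFinset (k : ℤ) : Finset (ℤ × ℤ × ℤ) :=
  ((Finset.Icc (-(k-1)) (k-1)) ×ˢ (Finset.Icc (-(k-1)) (k-1)) ×ˢ
    (Finset.Icc (-(k-1)) (k-1))).filter (fun p => p ∈ pentagramP k)

/-- The F-polynomial `F_{j,k} = Σ_{order ideals I of P_k} Π_{(r,s,t) ∈ I} y_{3r+s+j}`,
as an element of `ℤ[y_i : i ∈ ℤ] = MvPolynomial ℤ ℤ`. -/
def pentagramF (j k : ℤ) : MvPolynomial ℤ ℤ :=
  ∑ I ∈ (pentagramPFinset k).powerset.filter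
      (fun I : Finset (ℤ × ℤ × ℤ) => IsPentagramOrderIdeal k (↑I : Set (ℤ × ℤ × ℤ))),
    ∏ p ∈ I, X (3 * p.1 + p.2.1 + j)

/-- The ring endomorphism of `ℤ[y_i : i ∈ ℤ]` sending `y_i ↦ -1` for `i ∈ S`
and fixing the other variables; `substNeg S F` is `F|_S`. -/
def substNeg (S : Set ℤ) : MvPolynomial ℤ ℤ →+* MvPolynomial ℤ ℤ :=
  (MvPolynomial.aeval
    (fun i : ℤ => if i ∈ S then (-1 : MvPolynomial ℤ ℤ) else X i)).toRingHom

/-- The arithmetic progression `[a,b]_d = {a, a+d, a+2d, …, b}` (as a subset of `ℤ`). -/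
def AP (a b d : ℤ) : Set ℤ := {x | a ≤ x ∧ x ≤ b ∧ d ∣ (x - a)}

/-- The nonzero entries of the vector `v` alternate in sign: any two consecutive
nonzero entries have opposite signs. -/
def AltSign (k : ℕ) (v : Fin k → ℤ) : Prop :=
  ∀ c₁ c₂ : Fin k, c₁ < c₂ → v c₁ ≠ 0 → v c₂ ≠ 0 →
    (∀ c : Fin k, c₁ < c → c < c₂ → v c = 0) → v c₂ = -v c₁

/-- `A` is a `k × k` alternating sign matrix: entries in `{-1,0,1}`, the nonzero
entries of each row and column alternate in sign, and each row and column sums to `1`. -/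
def IsASM (k : ℕ) (A : Matrix (Fin k) (Fin k) ℤ) : Prop :=
  (∀ i c, A i c = -1 ∨ A i c = 0 ∨ A i c = 1) ∧
  (∀ i, AltSign k (fun c => A i c)) ∧ (∀ c, AltSign k (fun i => A i c)) ∧
  (∀ i, ∑ c, A i c = 1) ∧ (∀ c, ∑ i, A i c = 1)

/-- `A` avoids `(S, j)`: `j + 2i + 4l - 3k - 3 ∉ S` whenever `A_{il} = 1`
(rows and columns indexed `1, …, k`; here `Fin k` indices are shifted by one). -/
def ASMAvoids (k : ℕ) (j : ℤ) (S : Set ℤ) (A : Matrix (Fin k) (Fin k) ℤ) : Prop :=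
  ∀ i c : Fin k, A i c = 1 → j + 2 * ((i : ℤ) + 1) + 4 * ((c : ℤ) + 1) - 3 * k - 3 ∉ S

/-! ### Alternating sign matrices from corner sums -/

/-- A `0`-`1` sequence rising from `0` to `1` has differences that form a row of an alternating
sign matrix. -/
lemma altSign_of_partial_sums (k : ℕ) (a : ℕ → ℤ) (h01 : ∀ n ≤ k, a n = 0 ∨ a n = 1)
    (h0 : a 0 = 0) (hk : a k = 1) :
    AltSign k (fun c : Fin k => a (c + 1) - a c) ∧ ∑ c : Fin k, (a (c + 1) - a c) = 1 := by
  constructor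
  · intro c₁ c₂ h12 h1 h2 hz
    have hconst : ∀ n : ℕ, (c₁ : ℕ) + 1 ≤ n → n ≤ c₂ → a n = a (c₁ + 1) := by
      intro n hn
      induction n, hn using Nat.le_induction with
      | base => intro _; rfl
      | succ n hn ih =>
        intro hn2
        have := hz ⟨n, by omega⟩ (by rw [Fin.lt_def]; simp; omega)
          (by rw [Fin.lt_def]; simp; omega)
        simp only at this
        rw [← ih (by omega)]
        omega
    have e := hconst c₂ (by rw [Fin.lt_def] at h12; omega) le_rfl
    have b1 := h01 c₁ (by omega)
    have b2 := h01 (c₁ + 1) (by omega)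
    have b3 := h01 (c₂ + 1) (by omega)
    simp only at h1 h2 ⊢
    omega
  · rw [Fin.sum_univ_eq_sum_range (fun n => a (n + 1) - a n) k, Finset.sum_range_sub]
    omega

/-- The second difference of a corner-sum function is an alternating sign matrix. -/
lemma isASM_of_corner (k : ℕ) (C : ℕ → ℕ → ℤ)
    (hl : ∀ i ≤ k, C i 0 = 0) (hr : ∀ i ≤ k, C i k = i)
    (hb : ∀ l ≤ k, C 0 l = 0) (ht : ∀ l ≤ k, C k l = l)
    (hi : ∀ i l, i < k → l ≤ k → C (i + 1) l - C i l = 0 ∨ C (i + 1) l - C i l = 1)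
    (hj : ∀ i l, i ≤ k → l < k → C i (l + 1) - C i l = 0 ∨ C i (l + 1) - C i l = 1) :
    IsASM k (fun i c => C (i + 1) (c + 1) - C i (c + 1) - (C (i + 1) c - C i c)) := by
  have hrow : ∀ i : Fin k, _ := fun i =>
    altSign_of_partial_sums k (fun n => C (i + 1) n - C i n)
      (fun n hn => hi i n i.2 hn)
      (by simp [hl (i + 1) (by omega), hl i (by omega)])
      (by simp [hr (i + 1) (by omega), hr i (by omega)])
  have hcol : ∀ c : Fin k, _ := fun c =>
    altSign_of_partial_sums k (fun n => C n (c + 1) - C n c)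
      (fun n hn => hj n c hn c.2)
      (by simp [hb (c + 1) (by omega), hb c (by omega)])
      (by simp [ht (c + 1) (by omega), ht c (by omega)])
  have hswap : ∀ i c : Fin k, C (i + 1) (c + 1) - C i (c + 1) - (C (i + 1) c - C i c)
      = C (i + 1) (c + 1) - C (i + 1) c - (C i (c + 1) - C i c) := by
    intro i c; ring
  refine ⟨?_, fun i => (hrow i).1, ?_, fun i => (hrow i).2, ?_⟩
  · intro i c
    have h1 := hi i c i.2 c.2.le
    have h2 := hi i (c + 1) i.2 c.2
    simp only
    omega
  · intro c
    simp only [hswap]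
    exact (hcol c).1
  · intro c
    simp only [hswap]
    exact (hcol c).2

/-! ### Order ideals of `P_k` -/

lemma mem_pentagramQ (k r s t : ℤ) : (r, s, t) ∈ pentagramQ k ↔
    (r.natAbs : ℤ) + s.natAbs ≤ k - 2 ∧ (2 : ℤ) ∣ (r + s - k) ∧
    (4 : ℤ) ∣ (t - (2 * s.natAbs - k + 2)) ∧
    2 * (s.natAbs : ℤ) - k + 2 ≤ t ∧ t ≤ k - 2 - 2 * r.natAbs := by
  simp only [pentagramQ, Set.mem_ofPred_eq, Int.abs_eq_natAbs]

lemma pentagramCovers_iff (r s t r' s' t' : ℤ) : pentagramCovers (r, s, t) (r', s', t') ↔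
    t' = t + 1 ∧ ((r' - r).natAbs : ℤ) + (s' - s).natAbs = 1 := by
  simp only [pentagramCovers, Int.abs_eq_natAbs]

/-- Downward closure only has to be tested along covering relations. -/
lemma isPentagramOrderIdeal_iff (k : ℤ) (I : Set (ℤ × ℤ × ℤ)) :
    IsPentagramOrderIdeal k I ↔ I ⊆ pentagramP k ∧
      ∀ x y, x ∈ pentagramP k → y ∈ I → pentagramCovers x y → x ∈ I := by
  constructor
  · rintro ⟨h1, h2⟩
    exact ⟨h1, fun x y hx hy hc => h2 x y hy (Relation.ReflTransGen.single ⟨hx, h1 hy, hc⟩)⟩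
  · rintro ⟨h1, h2⟩
    refine ⟨h1, fun x y hy hxy => ?_⟩
    induction hxy using Relation.ReflTransGen.head_induction_on with
    | refl => exact hy
    | head hab _ ih => exact h2 _ _ hab.1 ih hab.2.2

/-- Covering relations only join `Q_k` with `Q_{k+1}`. -/
lemma mem_Q_of_covers {k : ℤ} {x y : ℤ × ℤ × ℤ} (hx : x ∈ pentagramQ (k + 1))
    (hy : y ∈ pentagramP k) (hc : pentagramCovers x y ∨ pentagramCovers y x) :
    y ∈ pentagramQ k := by
  obtain ⟨r, s, t⟩ := x
  obtain ⟨r', s', t'⟩ := y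
  rcases hy with hy | hy
  · exact hy
  · exfalso
    simp only [mem_pentagramQ, pentagramCovers_iff] at *
    omega

lemma not_mem_Q_of_mem_Q_succ {k : ℤ} {x : ℤ × ℤ × ℤ} (hx : x ∈ pentagramQ (k + 1)) :
    x ∉ pentagramQ k := by
  obtain ⟨r, s, t⟩ := x
  simp only [mem_pentagramQ] at *
  omega

lemma IsPentagramOrderIdeal.step {k : ℤ} {I : Set (ℤ × ℤ × ℤ)} (hI : IsPentagramOrderIdeal k I)
    {r s t r' s' t' : ℤ} (hy : (r', s', t') ∈ I)
    (hx : (r, s, t) ∈ pentagramQ k ∨ (r, s, t) ∈ pentagramQ (k + 1))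
    (hc : t' = t + 1 ∧ ((r' - r).natAbs : ℤ) + (s' - s).natAbs = 1) : (r, s, t) ∈ I :=
  ((isPentagramOrderIdeal_iff k I).1 hI).2 _ _ hx hy ((pentagramCovers_iff ..).2 hc)

/-- Consecutive elements `t`, `t + 4` of a column of `Q_k` are comparable, through the path
`(r,s,t), (r,s+1,t+1), (r+1,s+1,t+2), (r+1,s,t+3), (r,s,t+4)`. -/
lemma IsPentagramOrderIdeal.column_step {k : ℤ} {I : Set (ℤ × ℤ × ℤ)}
    (hI : IsPentagramOrderIdeal k I) {r s t : ℤ} (h : (r, s, t) ∈ pentagramQ k)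
    (h' : (r, s, t + 4) ∈ pentagramQ k) (hm : (r, s, t + 4) ∈ I) : (r, s, t) ∈ I := by
  rw [mem_pentagramQ] at h h'
  have h3 : (r + 1, s, t + 3) ∈ I :=
    hI.step hm (Or.inr ((mem_pentagramQ ..).2 (by omega))) (by omega)
  have h2 : (r + 1, s + 1, t + 2) ∈ I :=
    hI.step h3 (Or.inl ((mem_pentagramQ ..).2 (by omega))) (by omega)
  have h1 : (r, s + 1, t + 1) ∈ I :=
    hI.step h2 (Or.inr ((mem_pentagramQ ..).2 (by omega))) (by omega)
  exact hI.step h1 (Or.inl ((mem_pentagramQ ..).2 h)) (by omega)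

lemma IsPentagramOrderIdeal.column {k : ℤ} {I : Set (ℤ × ℤ × ℤ)}
    (hI : IsPentagramOrderIdeal k I) {r s : ℤ} (n : ℕ) : ∀ t : ℤ, (r, s, t) ∈ pentagramQ k →
    (r, s, t + 4 * n) ∈ pentagramQ k → (r, s, t + 4 * n) ∈ I → (r, s, t) ∈ I := by
  induction n with
  | zero => intro t _ _ h; simpa using h
  | succ n ih =>
    intro t h h' hm
    have e : t + 4 * ((n + 1 : ℕ) : ℤ) = (t + 4) + 4 * n := by push_cast; ring
    rw [e] at h' hm
    have h4 : (r, s, t + 4) ∈ pentagramQ k := by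
      rw [mem_pentagramQ] at *
      omega
    exact hI.column_step h h4 (ih _ h4 h' hm)

/-! ### Height functions -/

/-- A column `(r,s)` in the closed diamond on which heights are defined. The columns with
`|r| + |s| = k` carry no element of `Q_k`; they form the boundary. -/
def IsColumn (k r s : ℤ) : Prop :=
  (2 : ℤ) ∣ (r + s - k) ∧ (r.natAbs : ℤ) + s.natAbs ≤ k

/-- `h` is the height of `I` over the column `(r,s)`: the elements of `I ∩ Q_k` in this column are
those with `t ≤ h`. The congruence and the bounds make `h` unique. -/
def IsHeight (k : ℤ) (I : Set (ℤ × ℤ × ℤ)) (r s h : ℤ) : Prop :=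
  (4 : ℤ) ∣ (h - (2 * s.natAbs - k - 2)) ∧ 2 * (s.natAbs : ℤ) - k - 2 ≤ h ∧
    h ≤ k - 2 - 2 * r.natAbs ∧ ∀ t, (r, s, t) ∈ pentagramQ k → ((r, s, t) ∈ I ↔ t ≤ h)

lemma exists_isHeight {k : ℤ} {I : Set (ℤ × ℤ × ℤ)} (hI : IsPentagramOrderIdeal k I) {r s : ℤ}
    (hrs : IsColumn k r s) : ∃ h, IsHeight k I r s h := by
  obtain ⟨h, hh, hmax⟩ := Int.exists_greatest_of_bdd
    (P := fun z => z = 2 * (s.natAbs : ℤ) - k - 2 ∨ ((r, s, z) ∈ pentagramQ k ∧ (r, s, z) ∈ I))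
    ⟨k - 2 - 2 * r.natAbs, by
      rintro z (hz | ⟨hz, -⟩)
      · have := hrs.2
        omega
      · rw [mem_pentagramQ] at hz
        omega⟩ ⟨_, Or.inl rfl⟩
  refine ⟨h, ?_, ?_, ?_, ?_⟩
  · rcases hh with hh | ⟨hh, -⟩
    · omega
    · rw [mem_pentagramQ] at hh
      omega
  · exact hmax _ (Or.inl rfl)
  · rcases hh with hh | ⟨hh, -⟩
    · have := hrs.2
      omega
    · rw [mem_pentagramQ] at hh
      omega
  · intro t ht
    refine ⟨fun hm => hmax _ (Or.inr ⟨ht, hm⟩), fun hle => ?_⟩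
    rcases hh with hh | ⟨hh, hm⟩
    · rw [mem_pentagramQ] at ht
      omega
    · obtain ⟨n, hn⟩ : ∃ n : ℕ, h = t + 4 * n := by
        rw [mem_pentagramQ] at ht hh
        exact ⟨((h - t) / 4).toNat, by omega⟩
      subst hn
      exact hI.column n t ht hh hm

/-- A height exceeds the height of a diagonally adjacent column by at most `2`: the element
`(r₁, s₁, h₁)` of `I` lies above `(r₂, s₁, h₁ - 1)`, hence above `(r₂, s₂, h₁ - 2)`. -/
lemma IsHeight.sub_two_le {k : ℤ} {I : Set (ℤ × ℤ × ℤ)} (hI : IsPentagramOrderIdeal k I)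
    {r₁ s₁ h₁ r₂ s₂ h₂ : ℤ} (c₁ : IsColumn k r₁ s₁) (H₁ : IsHeight k I r₁ s₁ h₁)
    (H₂ : IsHeight k I r₂ s₂ h₂) (hr : (r₁ - r₂).natAbs = 1) (hs : (s₁ - s₂).natAbs = 1) :
    h₁ - 2 ≤ h₂ := by
  obtain ⟨a1, a2, a3, a4⟩ := H₁
  obtain ⟨b1, b2, b3, b4⟩ := H₂
  obtain ⟨c, d⟩ := c₁
  by_contra hlt
  have q1 : (r₁, s₁, h₁) ∈ pentagramQ k := (mem_pentagramQ ..).2 (by omega)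
  have q2 : (r₂, s₂, h₁ - 2) ∈ pentagramQ k := (mem_pentagramQ ..).2 (by omega)
  have m1 : (r₁, s₁, h₁) ∈ I := (a4 _ q1).2 le_rfl
  have m2 : (r₂, s₁, h₁ - 1) ∈ I :=
    hI.step m1 (Or.inr ((mem_pentagramQ ..).2 (by omega))) (by omega)
  have m3 : (r₂, s₂, h₁ - 2) ∈ I := hI.step m2 (Or.inl q2) (by omega)
  have := (b4 _ q2).1 m3
  omega

/-! ### Free elements -/

/-- `x ∈ Q_{k+1}` is free over `J ⊆ Q_k`: its lower covers lie in `J` and its upper covers do not,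
so membership of `x` in an order ideal `I` with `I ∩ Q_k = J` is unconstrained. -/
def IsFree (k : ℤ) (J : Set (ℤ × ℤ × ℤ)) (x : ℤ × ℤ × ℤ) : Prop :=
  x ∈ pentagramQ (k + 1) ∧ (∀ y ∈ pentagramQ k, pentagramCovers y x → y ∈ J) ∧
    ∀ y ∈ pentagramQ k, pentagramCovers x y → y ∉ J

lemma natAbs_add_natAbs_eq_one {a b : ℤ} (h : (a.natAbs : ℤ) + b.natAbs = 1) :
    a = 0 ∧ (b = 1 ∨ b = -1) ∨ b = 0 ∧ (a = 1 ∨ a = -1) := by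
  omega

/-- Where the heights have a saddle, with the `s`-neighbours `2` above the `r`-neighbours, there is
a free element. -/
lemma isFree_of_isHeight {k : ℤ} {I : Set (ℤ × ℤ × ℤ)} {r s m : ℤ}
    (H10 : IsHeight k I r (s - 1) m) (H01 : IsHeight k I r (s + 1) m)
    (H00 : IsHeight k I (r - 1) s (m - 2)) (H11 : IsHeight k I (r + 1) s (m - 2))
    (hrs : (2 : ℤ) ∣ (r + s - (k + 1))) :
    IsFree k (I ∩ pentagramQ k) (r, s, m + 1) := by
  obtain ⟨p1, p2, p3, p4⟩ := H00
  obtain ⟨q1, q2, q3, q4⟩ := H10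
  obtain ⟨u1, u2, u3, u4⟩ := H01
  obtain ⟨v1, v2, v3, v4⟩ := H11
  refine ⟨(mem_pentagramQ ..).2 (by omega), ?_, ?_⟩
  · rintro ⟨r', s', t'⟩ hy hcov
    refine ⟨?_, hy⟩
    have hy' := (mem_pentagramQ ..).1 hy
    rw [pentagramCovers_iff] at hcov
    have hpar : (4 : ℤ) ∣ (t' - (2 * s' - k + 2)) ∧
        (4 : ℤ) ∣ (m - (2 * (s - 1) - k - 2)) := by
      constructor <;> clear hcov p1 p2 p3 u1 u2 u3 v1 v2 v3 <;> omega
    obtain ⟨rfl, hs'⟩ : r' = r ∧ (s' = s - 1 ∨ s' = s + 1) := by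
      clear hy' p1 p2 p3 u1 u2 u3 v1 v2 v3 q1 q2 q3
      have := natAbs_add_natAbs_eq_one hcov.2
      omega
    rcases hs' with rfl | rfl
    · exact (q4 _ hy).2 (by omega)
    · exact (u4 _ hy).2 (by omega)
  · rintro ⟨r', s', t'⟩ hy hcov hmem
    have hy' := (mem_pentagramQ ..).1 hy
    rw [pentagramCovers_iff] at hcov
    have hpar : (4 : ℤ) ∣ (t' - (2 * s' - k + 2)) ∧
        (4 : ℤ) ∣ (m - (2 * (s - 1) - k - 2)) := by
      constructor <;> clear hcov p1 p2 p3 u1 u2 u3 v1 v2 v3 <;> omega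
    obtain ⟨rfl, hs'⟩ : s' = s ∧ (r' = r - 1 ∨ r' = r + 1) := by
      clear hy' p1 p2 p3 u1 u2 u3 v1 v2 v3 q1 q2 q3
      have := natAbs_add_natAbs_eq_one hcov.2
      omega
    rcases hs' with rfl | rfl
    · have := (p4 _ hy).1 hmem.1
      omega
    · have := (v4 _ hy).1 hmem.1
      omega

/-- The alternating sign matrix of an order ideal has a `1` with index in `S`, and this `1` yields
a free element whose variable is indexed by an element of `S`. -/
lemma exists_isFree (k : ℕ) (j : ℤ) (S : Set ℤ)
    (h : ∀ A : Matrix (Fin k) (Fin k) ℤ, IsASM k A → ¬ ASMAvoids k j S A)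
    {I : Set (ℤ × ℤ × ℤ)} (hI : IsPentagramOrderIdeal k I) :
    ∃ x, IsFree k (I ∩ pentagramQ k) x ∧ 3 * x.1 + x.2.1 + j ∈ S := by
  have hex : ∀ r s : ℤ, ∃ h, IsColumn k r s → IsHeight k I r s h := by
    intro r s
    by_cases hc : IsColumn k r s
    · obtain ⟨h, hh⟩ := exists_isHeight hI hc
      exact ⟨h, fun _ => hh⟩
    · exact ⟨0, fun hc' => absurd hc' hc⟩
  choose ht hht using hex
  -- The heights in matrix coordinates, `g i l` being the height over `(i + l - k, l - i)`.
  obtain ⟨g, hg⟩ : ∃ g : ℕ → ℕ → ℤ, ∀ i l : ℕ, g i l = ht ((i : ℤ) + l - k) ((l : ℤ) - i) :=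
    ⟨_, fun _ _ => rfl⟩
  have hcol : ∀ i l : ℕ, i ≤ k → l ≤ k → IsColumn k ((i : ℤ) + l - k) ((l : ℤ) - i) := by
    intro i l hi hl
    constructor <;> omega
  have hgh : ∀ i l : ℕ, i ≤ k → l ≤ k →
      IsHeight k I ((i : ℤ) + l - k) ((l : ℤ) - i) (g i l) := by
    intro i l hi hl
    rw [hg]
    exact hht _ _ (hcol i l hi hl)
  have hstepi : ∀ i l : ℕ, i < k → l ≤ k →
      g (i + 1) l = g i l + 2 ∨ g (i + 1) l = g i l - 2 := by
    intro i l hi hl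
    have H1 := hgh i l hi.le hl
    have H2 := hgh (i + 1) l hi hl
    have e1 := H1.sub_two_le hI (hcol i l hi.le hl) H2 (by omega) (by omega)
    have e2 := H2.sub_two_le hI (hcol (i + 1) l hi hl) H1 (by omega) (by omega)
    have d1 := H1.1
    have d2 := H2.1
    omega
  have hstepj : ∀ i l : ℕ, i ≤ k → l < k →
      g i (l + 1) = g i l + 2 ∨ g i (l + 1) = g i l - 2 := by
    intro i l hi hl
    have H1 := hgh i l hi hl.le
    have H2 := hgh i (l + 1) hi hl
    have e1 := H1.sub_two_le hI (hcol i l hi hl.le) H2 (by omega) (by omega)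
    have e2 := H2.sub_two_le hI (hcol i (l + 1) hi hl) H1 (by omega) (by omega)
    have d1 := H1.1
    have d2 := H2.1
    omega
  obtain ⟨C, hC⟩ : ∃ C : ℕ → ℕ → ℤ, ∀ i l : ℕ, C i l = (2 * ((i : ℤ) + l) - g i l - k - 2) / 4 :=
    ⟨_, fun _ _ => rfl⟩
  have hC4 : ∀ i l : ℕ, i ≤ k → l ≤ k → 4 * C i l = 2 * ((i : ℤ) + l) - g i l - k - 2 := by
    intro i l hi hl
    obtain ⟨d1, -, -, -⟩ := hgh i l hi hl
    rw [hC]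
    omega
  have hA := isASM_of_corner k C
    (by intro i hi; have := hC4 i 0 hi (by omega)
        obtain ⟨-, d2, d3, -⟩ := hgh i 0 hi (by omega); omega)
    (by intro i hi; have := hC4 i k hi le_rfl
        obtain ⟨-, d2, d3, -⟩ := hgh i k hi le_rfl; omega)
    (by intro l hl; have := hC4 0 l (by omega) hl
        obtain ⟨-, d2, d3, -⟩ := hgh 0 l (by omega) hl; omega)
    (by intro l hl; have := hC4 k l le_rfl hl
        obtain ⟨-, d2, d3, -⟩ := hgh k l le_rfl hl; omega)
    (by intro i l hi hl
        have h1 := hC4 i l hi.le hl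
        have h2 := hC4 (i + 1) l hi hl
        have h3 := hstepi i l hi hl
        omega)
    (by intro i l hi hl
        have h1 := hC4 i l hi hl.le
        have h2 := hC4 i (l + 1) hi hl
        have h3 := hstepj i l hi hl
        omega)
  have hno := h _ hA
  unfold ASMAvoids at hno
  push Not at hno
  obtain ⟨⟨i, hi⟩, ⟨c, hc⟩, hone, hS⟩ := hno
  simp only at hone hS
  -- An entry `1` forces the local pattern of heights around the column of the free element.
  obtain ⟨e1, e2, e3⟩ : g i (c + 1) = g (i + 1) c ∧ g i c = g i (c + 1) - 2 ∧
      g (i + 1) (c + 1) = g i (c + 1) - 2 := by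
    have := hC4 i c hi.le hc.le
    have := hC4 (i + 1) c hi hc.le
    have := hC4 i (c + 1) hi.le hc
    have := hC4 (i + 1) (c + 1) hi hc
    have := hstepi i c hi hc.le
    have := hstepj i c hi.le hc
    have := hstepi i (c + 1) hi hc
    have := hstepj (i + 1) c hi hc
    omega
  have H00 := hgh i c hi.le hc.le
  have H10 := hgh (i + 1) c hi hc.le
  have H01 := hgh i (c + 1) hi.le hc
  have H11 := hgh (i + 1) (c + 1) hi hc
  rw [← e1] at H10
  rw [e2] at H00
  rw [e3] at H11
  generalize g i (c + 1) = m at H00 H10 H01 H11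
  push_cast at H00 H10 H01 H11
  obtain ⟨r, hr⟩ : ∃ r : ℤ, r = (i : ℤ) + c + 1 - k := ⟨_, rfl⟩
  obtain ⟨s, hs⟩ : ∃ s : ℤ, s = (c : ℤ) - i := ⟨_, rfl⟩
  rw [show (i : ℤ) + c - k = r - 1 by omega, ← hs] at H00
  rw [show (i : ℤ) + 1 + c - k = r by omega, show (c : ℤ) - (i + 1) = s - 1 by omega] at H10
  rw [show (i : ℤ) + (c + 1) - k = r by omega, show (c : ℤ) + 1 - i = s + 1 by omega] at H01
  rw [show (i : ℤ) + 1 + (c + 1) - k = r + 1 by omega,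
    show (c : ℤ) + 1 - (i + 1) = s by omega] at H11
  refine ⟨(r, s, m + 1), isFree_of_isHeight H10 H01 H00 H11 (by omega), ?_⟩
  convert hS using 1
  simp only
  omega

/-! ### The toggling involution -/

/-- Add `x` to `I` if it is absent, remove it if it is present. -/
def toggleElt (x : ℤ × ℤ × ℤ) (I : Finset (ℤ × ℤ × ℤ)) : Finset (ℤ × ℤ × ℤ) :=
  if x ∈ I then I.erase x else insert x I

lemma mem_toggleElt_of_ne {x y : ℤ × ℤ × ℤ} (I : Finset (ℤ × ℤ × ℤ)) (hy : y ≠ x) :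
    y ∈ toggleElt x I ↔ y ∈ I := by
  unfold toggleElt
  split_ifs <;> simp [hy]

lemma toggleElt_toggleElt (x : ℤ × ℤ × ℤ) (I : Finset (ℤ × ℤ × ℤ)) :
    toggleElt x (toggleElt x I) = I := by
  by_cases hx : x ∈ I <;> simp [toggleElt, hx]

lemma toggleElt_ne (x : ℤ × ℤ × ℤ) (I : Finset (ℤ × ℤ × ℤ)) : toggleElt x I ≠ I := by
  intro he
  have := congrArg (x ∈ ·) he
  by_cases hx : x ∈ I <;> simp [toggleElt, hx] at this

lemma prod_add_prod_toggleElt {R : Type*} [CommRing R] (f : ℤ × ℤ × ℤ → R) (x : ℤ × ℤ × ℤ)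
    (hf : f x = -1) (I : Finset (ℤ × ℤ × ℤ)) :
    ∏ p ∈ I, f p + ∏ p ∈ toggleElt x I, f p = 0 := by
  unfold toggleElt
  split_ifs with hx
  · rw [← Finset.mul_prod_erase I f hx, hf]
    ring
  · rw [Finset.prod_insert hx, hf]
    ring

lemma toggleElt_inter_Q {k : ℤ} {x : ℤ × ℤ × ℤ} (hx : x ∈ pentagramQ (k + 1))
    (I : Finset (ℤ × ℤ × ℤ)) :
    (↑(toggleElt x I) : Set (ℤ × ℤ × ℤ)) ∩ pentagramQ k = ↑I ∩ pentagramQ k := by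
  ext y
  simp only [Set.mem_inter_iff, Finset.mem_coe]
  refine and_congr_left fun hy => mem_toggleElt_of_ne I ?_
  rintro rfl
  exact not_mem_Q_of_mem_Q_succ hx hy

lemma isPentagramOrderIdeal_toggleElt {k : ℤ} {x : ℤ × ℤ × ℤ} {I : Finset (ℤ × ℤ × ℤ)}
    (hI : IsPentagramOrderIdeal k (↑I : Set (ℤ × ℤ × ℤ)))
    (hx : IsFree k (↑I ∩ pentagramQ k) x) :
    IsPentagramOrderIdeal k (↑(toggleElt x I) : Set (ℤ × ℤ × ℤ)) := by
  rw [isPentagramOrderIdeal_iff] at hI ⊢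
  obtain ⟨hxQ, hlow, hup⟩ := hx
  constructor
  · intro y hy
    by_cases hyx : y = x
    · exact hyx ▸ Or.inr hxQ
    · exact hI.1 ((mem_toggleElt_of_ne I hyx).1 hy)
  · intro y z hy hz hc
    by_cases hzx : z = x
    · subst hzx
      have hyQ := mem_Q_of_covers hxQ hy (Or.inr hc)
      have hyz : y ≠ z := by
        rintro rfl
        exact not_mem_Q_of_mem_Q_succ hxQ hyQ
      exact (mem_toggleElt_of_ne I hyz).2 (hlow y hyQ hc).1
    · have hzI := (mem_toggleElt_of_ne I hzx).1 hz
      have hyI := hI.2 y z hy hzI hc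
      by_cases hyx : y = x
      · subst hyx
        have hzQ := mem_Q_of_covers hxQ (hI.1 hzI) (Or.inl hc)
        exact absurd ⟨hzI, hzQ⟩ (hup z hzQ hc)
      · exact (mem_toggleElt_of_ne I hyx).2 hyI

lemma mem_pentagramPFinset {k : ℤ} {x : ℤ × ℤ × ℤ} (hx : x ∈ pentagramP k) :
    x ∈ pentagramPFinset k := by
  obtain ⟨r, s, t⟩ := x
  simp only [pentagramPFinset, Finset.mem_filter, Finset.mem_product, Finset.mem_Icc]
  refine ⟨?_, hx⟩
  rcases hx with hx | hx <;> rw [mem_pentagramQ] at hx <;> omega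

theorem stmt6 (k : ℕ) (hk : 1 ≤ k) (j : ℤ) (S : Set ℤ)
    (hpar : ∀ x ∈ S, (2 : ℤ) ∣ (x - (j + k + 1)))
    (h : ∀ A : Matrix (Fin k) (Fin k) ℤ, IsASM k A → ¬ ASMAvoids k j S A) :
    substNeg S (pentagramF j k) = 0 := by
  -- The toggled element is chosen as a function of `I ∩ Q_k` alone, so toggling is an involution.
  obtain ⟨φ, hφ⟩ : ∃ φ : Set (ℤ × ℤ × ℤ) → ℤ × ℤ × ℤ, ∀ J,
      (∃ x, IsFree k J x ∧ 3 * x.1 + x.2.1 + j ∈ S) →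
        IsFree k J (φ J) ∧ 3 * (φ J).1 + (φ J).2.1 + j ∈ S := by
    have : ∀ J : Set (ℤ × ℤ × ℤ), ∃ y, (∃ x, IsFree k J x ∧ 3 * x.1 + x.2.1 + j ∈ S) →
        IsFree k J y ∧ 3 * y.1 + y.2.1 + j ∈ S := by
      intro J
      by_cases hJ : ∃ x, IsFree k J x ∧ 3 * x.1 + x.2.1 + j ∈ S
      · obtain ⟨x, hx⟩ := hJ
        exact ⟨x, fun _ => hx⟩
      · exact ⟨0, fun hJ' => absurd hJ' hJ⟩
    choose φ hφ using this
    exact ⟨φ, hφ⟩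
  have hfree : ∀ I : Finset (ℤ × ℤ × ℤ), IsPentagramOrderIdeal k (↑I : Set (ℤ × ℤ × ℤ)) → _ :=
    fun I hI => hφ (↑I ∩ pentagramQ k) (exists_isFree k j S h hI)
  unfold pentagramF
  rw [map_sum]
  refine Finset.sum_involution (fun I _ => toggleElt (φ (↑I ∩ pentagramQ k)) I) ?_ ?_ ?_ ?_
  · intro I hI
    have hI' := (Finset.mem_filter.1 hI).2
    rw [map_prod, map_prod]
    refine prod_add_prod_toggleElt _ _ ?_ I
    simp [substNeg, (hfree I hI').2]
  · intro I _ _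
    exact toggleElt_ne _ _
  · intro I hI
    have hI' := (Finset.mem_filter.1 hI).2
    have ht := isPentagramOrderIdeal_toggleElt hI' (hfree I hI').1
    exact Finset.mem_filter.2
      ⟨Finset.mem_powerset.2 fun y hy => mem_pentagramPFinset (ht.1 hy), ht⟩
  · intro I hI
    have hI' := (Finset.mem_filter.1 hI).2
    rw [toggleElt_inter_Q (hfree I hI').1.1, toggleElt_toggleElt]

end
end

section
/- Fix integers j, k ≥ 1, and l with |l| ≤ k+1 and l ≡ k+1 (mod 2), let σ be as defined, and let S = [j−3k+3, j+3k−3]_2 \ {j+l−2k, j+l+σ, j+l+2k}. Then there exists exactly one matrix A ∈ ASM(k) that avoids (S,j), and this A is a permutation matrix (each row and each column of A contains exactly one entry equal to 1 and no entry equal to −1). -/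
/-!
The number attached to the cell `(i, c)` always lies in the progression of which `S` is a part, so an
entry `1` of an avoiding matrix is confined to the cells where that number is one of the three
removed values. With zero-based indices these cells form three lines `i + 2c = m`, `i + 2c = M`,
`i + 2c = m + 2k`, where `m = (l + k - 3) / 2` and `M = m + k + σ / 2`; the shift `σ` makes `M` and
`m` of opposite parity.

Hence in a row `i ≡ m (mod 2)` only the first and third lines have integral points, and their columns
differ by `k`, so exactly one of them is in range; in the other rows only the middle line matters,
and its column is in range (`IsAllowed.exists_col`, `IsAllowed.col_unique`). No column contains two
allowed cells (`IsAllowed.row_unique`). So the allowed cells are the graph of a permutation, whose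
matrix is the required `A`. Conversely a row of entries at most `1` with sum `1` and at most one
positive position is a unit vector, which forces every avoiding matrix to equal `A`.
-/

open MvPolynomial
open scoped Classical

noncomputable section

/-- The shift `σ`: `0` if `k` is odd, `-2` if `k` is even and `l+k ≡ 1 (mod 4)`,
and `2` if `k` is even and `l+k ≡ 3 (mod 4)`. -/
def pentagramSigma (k l : ℤ) : ℤ :=
  if k % 2 = 1 then 0 else if (l + k) % 4 = 1 then -2 else 2

/-- `A` is a permutation matrix: each row and each column contains exactly one entry
equal to `1` and no entry equal to `-1` (all other entries being `0` by the ASM property). -/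
def IsPermMatrix (k : ℕ) (A : Matrix (Fin k) (Fin k) ℤ) : Prop :=
  (∀ i c, A i c ≠ -1) ∧ (∀ i, ∃! c, A i c = 1) ∧ (∀ c, ∃! i, A i c = 1)

/-- The cell in (zero-based) row `i` and column `c` lies on one of the three lines, given by the
removed values `j + l - 2k`, `j + l + σ`, `j + l + 2k`, on which an avoiding matrix may have a `1`. -/
def IsAllowed (k l i c : ℤ) : Prop :=
  2 * i + 4 * c + 3 - 3 * k = l - 2 * k ∨
  2 * i + 4 * c + 3 - 3 * k = l + pentagramSigma k l ∨
  2 * i + 4 * c + 3 - 3 * k = l + 2 * k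

lemma pentagramSigma_cases {k l : ℤ} (hpar : (2 : ℤ) ∣ (l - (k + 1))) :
    (k % 2 = 1 ∧ pentagramSigma k l = 0) ∨
    (k % 2 = 0 ∧ (l + k) % 4 = 1 ∧ pentagramSigma k l = -2) ∨
    (k % 2 = 0 ∧ (l + k) % 4 = 3 ∧ pentagramSigma k l = 2) := by
  unfold pentagramSigma
  split_ifs <;> omega

lemma IsAllowed.exists_col {k l i : ℤ} (hl : |l| ≤ k + 1) (hpar : (2 : ℤ) ∣ (l - (k + 1)))
    (hi0 : 0 ≤ i) (hik : i < k) : ∃ c, 0 ≤ c ∧ c < k ∧ IsAllowed k l i c := by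
  have hσ := pentagramSigma_cases hpar
  obtain ⟨hl1, hl2⟩ := abs_le.mp hl
  unfold IsAllowed
  -- With `m = (l + k - 3) / 2`, the first test is `i ≡ m (mod 2)` and the second is `i ≤ m`.
  by_cases h : (l + k - 3 - 2 * i) % 4 = 0
  · by_cases h' : 0 ≤ l + k - 3 - 2 * i
    · exact ⟨(l + k - 3 - 2 * i) / 4, by omega, by omega, Or.inl (by omega)⟩
    · exact ⟨(l + k - 3 - 2 * i) / 4 + k, by omega, by omega, Or.inr (Or.inr (by omega))⟩
  · exact ⟨(l + 3 * k + pentagramSigma k l - 3 - 2 * i) / 4, by omega, by omega,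
      Or.inr (Or.inl (by omega))⟩

lemma IsAllowed.col_unique {k l i c c' : ℤ} (hpar : (2 : ℤ) ∣ (l - (k + 1)))
    (hc : 0 ≤ c ∧ c < k) (hc' : 0 ≤ c' ∧ c' < k)
    (h : IsAllowed k l i c) (h' : IsAllowed k l i c') : c = c' := by
  have hσ := pentagramSigma_cases hpar
  unfold IsAllowed at h h'
  omega

lemma IsAllowed.row_unique {k l i i' c : ℤ} (hpar : (2 : ℤ) ∣ (l - (k + 1)))
    (hi : 0 ≤ i ∧ i < k) (hi' : 0 ≤ i' ∧ i' < k)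
    (h : IsAllowed k l i c) (h' : IsAllowed k l i' c) : i = i' := by
  have hσ := pentagramSigma_cases hpar
  unfold IsAllowed at h h'
  omega

/-- Avoidance in terms of allowed cells: the values attached to all cells lie in the progression
`[j - 3k + 3, j + 3k - 3]_2`, so only membership in the removed triple matters. -/
lemma asmAvoids_iff (k : ℕ) (j l : ℤ) (A : Matrix (Fin k) (Fin k) ℤ) :
    ASMAvoids k j (AP (j - 3 * k + 3) (j + 3 * k - 3) 2 \
      {j + l - 2 * k, j + l + pentagramSigma k l, j + l + 2 * k}) A ↔
    ∀ i c : Fin k, A i c = 1 → IsAllowed k l i c := by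
  unfold ASMAvoids
  refine forall_congr' fun i => forall_congr' fun c => imp_congr_right fun _ => ?_
  have hi := i.isLt
  have hc := c.isLt
  simp only [AP, IsAllowed, Set.mem_sdiff, Set.mem_ofPred_eq, Set.mem_insert_iff,
    Set.mem_singleton_iff]
  omega

/-- A vector with entries at most `1` and sum `1`, whose only possible entry equal to `1` is at
`c₀`, is the unit vector at `c₀`. -/
lemma eq_ite_of_sum_eq_one {k : ℕ} (v : Fin k → ℤ) (c₀ : Fin k) (hle : ∀ c, v c ≤ 1)
    (hone : ∀ c, v c = 1 → c = c₀) (hsum : ∑ c, v c = 1) (c : Fin k) :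
    v c = if c = c₀ then 1 else 0 := by
  have hnonpos : ∀ c ∈ Finset.univ.erase c₀, v c ≤ 0 := by
    intro c hc
    have h1 := hle c
    have h2 : v c ≠ 1 := fun h => Finset.ne_of_mem_erase hc (hone c h)
    omega
  have hsplit := Finset.add_sum_erase Finset.univ v (Finset.mem_univ c₀)
  have hrest := Finset.sum_nonpos hnonpos
  have h0 := hle c₀
  split_ifs with h
  · subst h; omega
  · exact (Finset.sum_eq_zero_iff_of_nonpos hnonpos).mp (by omega) c
      (Finset.mem_erase.mpr ⟨h, Finset.mem_univ c⟩)

theorem stmt7 (k : ℕ) (hk : 1 ≤ k) (j l : ℤ) (hl : |l| ≤ (k : ℤ) + 1)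
    (hpar : (2 : ℤ) ∣ (l - ((k : ℤ) + 1))) :
    ∃ A : Matrix (Fin k) (Fin k) ℤ,
      IsASM k A ∧
      ASMAvoids k j (AP (j - 3 * k + 3) (j + 3 * k - 3) 2 \
        {j + l - 2 * k, j + l + pentagramSigma k l, j + l + 2 * k}) A ∧
      IsPermMatrix k A ∧
      ∀ B : Matrix (Fin k) (Fin k) ℤ, IsASM k B →
        ASMAvoids k j (AP (j - 3 * k + 3) (j + 3 * k - 3) 2 \
          {j + l - 2 * k, j + l + pentagramSigma k l, j + l + 2 * k}) B → B = A := by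
  have hcol : ∀ i : Fin k, ∃ c : Fin k, IsAllowed k l i c := by
    intro i
    obtain ⟨c, h0, h1, h⟩ := IsAllowed.exists_col (i := (i : ℤ)) hl hpar (by omega)
      (by have := i.isLt; omega)
    refine ⟨⟨c.toNat, by omega⟩, ?_⟩
    rwa [show (((⟨c.toNat, by omega⟩ : Fin k) : ℕ) : ℤ) = c from Int.toNat_of_nonneg h0]
  choose f hf using hcol
  have hrange : ∀ i : Fin k, (0 : ℤ) ≤ (i : ℤ) ∧ (i : ℤ) < k := fun i => by
    have := i.isLt
    omega
  have huniq : ∀ i c : Fin k, IsAllowed k l i c → c = f i := by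
    intro i c h
    have := IsAllowed.col_unique hpar (hrange c) (hrange (f i)) h (hf i)
    omega
  have hinj : Function.Injective f := by
    intro i i' h
    have h1 := hf i
    rw [h] at h1
    have := IsAllowed.row_unique hpar (hrange i) (hrange i') h1 (hf i')
    omega
  have hsurj : Function.Surjective f := Finite.surjective_of_injective hinj
  refine ⟨fun i c => if c = f i then 1 else 0, ⟨?_, ?_, ?_, ?_, ?_⟩, ?_, ⟨?_, ?_, ?_⟩, ?_⟩
  · intro i c
    dsimp only
    split_ifs <;> simp
  · intro i c₁ c₂ hlt h1 h2
    simp only [ne_eq, ite_eq_right_iff, one_ne_zero, imp_false, not_not] at h1 h2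
    exact absurd (h1.trans h2.symm) hlt.ne
  · intro c i₁ i₂ hlt h1 h2
    simp only [ne_eq, ite_eq_right_iff, one_ne_zero, imp_false, not_not] at h1 h2
    exact absurd (hinj (h1.symm.trans h2)) hlt.ne
  · intro i
    simp
  · intro c
    obtain ⟨i₀, rfl⟩ := hsurj c
    simp [hinj.eq_iff]
  · refine (asmAvoids_iff k j l _).mpr ?_
    intro i c h
    simp only [ite_eq_left_iff, zero_ne_one, imp_false, not_not] at h
    exact h ▸ hf i
  · intro i c
    dsimp only
    split_ifs <;> simp
  · intro i
    exact ⟨f i, by simp, fun c h => by simpa using h⟩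
  · intro c
    obtain ⟨i₀, rfl⟩ := hsurj c
    refine ⟨i₀, by simp, fun i h => ?_⟩
    simp only [ite_eq_left_iff, zero_ne_one, imp_false, not_not] at h
    exact (hinj h).symm
  · intro B hB hav
    rw [asmAvoids_iff] at hav
    ext i c
    refine eq_ite_of_sum_eq_one (B i) (f i) (fun c => ?_) (fun c h => huniq i c (hav i c h))
      (hB.2.2.2.1 i) c
    have := hB.1 i c
    omega

end
end
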